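/- arXiv:2206.15339 — 2 statements merged into one kernel-verified Lean document; each statement's English description precedes it below -/
import Mathlib

section
/- Let A and B be nonempty compact subsets of the Euclidean plane with hausdorffDist A B ≤ 1, and let α ∈ [0,1]. Then hausdorffDist A (T_α(A,B)) ≤ α and hausdorffDist B (T_α(A,B)) ≤ 1 − α. -/
open Metric Set Pointwise

noncomputable section

/-- The Euclidean plane. -/
abbrev Plane := EuclideanSpace ℝ (Fin 2)

/-- The Voronoi morph: each point of `A` is moved a fraction `α` of the way towards a
nearest point of `B`, and each point of `B` is moved a fraction `1 - α` of the way towards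
a nearest point of `A`; all nearest points are used when they are not unique. -/
def voronoiMorph (A B : Set Plane) (α : ℝ) : Set Plane :=
  {p | ∃ a ∈ A, ∃ b ∈ B, dist a b = Metric.infDist a B ∧ p = (1 - α) • a + α • b} ∪
  {p | ∃ b ∈ B, ∃ a ∈ A, dist b a = Metric.infDist b A ∧ p = (1 - α) • a + α • b}

/-- The dilation morph `S_α(A,B) = (A ⊕ D_α) ∩ (B ⊕ D_{1-α})`. -/
def dilationMorph (A B : Set Plane) (α : ℝ) : Set Plane :=
  (A + Metric.closedBall (0 : Plane) α) ∩ (B + Metric.closedBall (0 : Plane) (1 - α))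

/-- The closing of a set by a disk of radius `φ`: dilation followed by erosion. -/
def closing (X : Set Plane) (φ : ℝ) : Set Plane :=
  ((X + Metric.closedBall (0 : Plane) φ)ᶜ + Metric.closedBall (0 : Plane) φ)ᶜ

/-- The mixed morph `M_{α,φ}(A,B)`. -/
def mixedMorph (A B : Set Plane) (α φ : ℝ) : Set Plane :=
  closing (voronoiMorph A B α) φ ∩ dilationMorph A B α

/-!
Each point of the morph comes from a pair `(a, b)` in which one point is nearest to the other, so
`dist a b ≤ hausdorffDist A B`. When nearest points exist, these pairs project onto both `A` and
`B`; hence `A`, `B` and the morph are images of one set of pairs under the two projections and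
`(a, b) ↦ (1 - α) • a + α • b`. Comparing these maps pair by pair bounds the Hausdorff distances.
-/

section PseudoMetricSpace

variable {X : Type*} [PseudoMetricSpace X] {A B : Set X}

theorem hausdorffDist_image_image_le {ι : Type*} {f g : ι → X} {s : Set ι} {r : ℝ} (hr : 0 ≤ r)
    (h : ∀ i ∈ s, dist (f i) (g i) ≤ r) : hausdorffDist (f '' s) (g '' s) ≤ r := by
  refine hausdorffDist_le_of_mem_dist hr ?_ ?_
  · rintro _ ⟨i, hi, rfl⟩
    exact ⟨g i, mem_image_of_mem g hi, h i hi⟩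
  · rintro _ ⟨i, hi, rfl⟩
    exact ⟨f i, mem_image_of_mem f hi, dist_comm (f i) (g i) ▸ h i hi⟩

/-- A set is proximinal if every point of the space has a nearest point in it. This holds for
nonempty compact sets, and for nonempty closed sets in a proper space. -/
def IsProximinal (A : Set X) : Prop :=
  ∀ x, ∃ a ∈ A, infDist x A = dist x a

/-- The pairs `(a, b) ∈ A × B` such that `b` is a point of `B` nearest to `a`, or `a` is a point
of `A` nearest to `b`: the correspondence along which the Voronoi morph moves points. -/
def nearestPairs (A B : Set X) : Set (X × X) :=
  {p ∈ A ×ˢ B | dist p.1 p.2 = infDist p.1 B ∨ dist p.2 p.1 = infDist p.2 A}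

theorem dist_le_hausdorffDist_of_mem_nearestPairs (hAB : hausdorffEDist A B ≠ ⊤) {p : X × X}
    (hp : p ∈ nearestPairs A B) : dist p.1 p.2 ≤ hausdorffDist A B := by
  obtain ⟨⟨ha, hb⟩, h | h⟩ := hp
  · exact h ▸ infDist_le_hausdorffDist_of_mem ha hAB
  · rw [dist_comm, h, hausdorffDist_comm]
    exact infDist_le_hausdorffDist_of_mem hb (hausdorffEDist_comm (s := A) ▸ hAB)

theorem image_fst_nearestPairs (hB : IsProximinal B) : Prod.fst '' nearestPairs A B = A := by
  refine Subset.antisymm (image_subset_iff.2 fun p hp => hp.1.1) fun a ha => ?_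
  obtain ⟨b, hb, hab⟩ := hB a
  exact ⟨(a, b), ⟨⟨ha, hb⟩, .inl hab.symm⟩, rfl⟩

theorem image_snd_nearestPairs (hA : IsProximinal A) : Prod.snd '' nearestPairs A B = B := by
  refine Subset.antisymm (image_subset_iff.2 fun p hp => hp.1.2) fun b hb => ?_
  obtain ⟨a, ha, hba⟩ := hA b
  exact ⟨(a, b), ⟨⟨ha, hb⟩, .inr hba.symm⟩, rfl⟩

end PseudoMetricSpace

section NormedAddTorsor

variable {𝕜 V P : Type*} [NormedField 𝕜] [SeminormedAddCommGroup V] [NormedSpace 𝕜 V]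
  [PseudoMetricSpace P] [NormedAddTorsor V P] {A B : Set P}

/-- The Voronoi morph in an arbitrary affine space over a normed space, with its two families of
points combined by means of `nearestPairs`. -/
def nearestPointMorph (A B : Set P) (α : 𝕜) : Set P :=
  (fun p : P × P => AffineMap.lineMap p.1 p.2 α) '' nearestPairs A B

theorem hausdorffDist_left_nearestPointMorph_le (hB : IsProximinal B)
    (hAB : hausdorffEDist A B ≠ ⊤) (α : 𝕜) :
    hausdorffDist A (nearestPointMorph A B α) ≤ ‖α‖ * hausdorffDist A B := by
  nth_rewrite 1 [← image_fst_nearestPairs (A := A) hB]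
  refine hausdorffDist_image_image_le (mul_nonneg (norm_nonneg α) hausdorffDist_nonneg) ?_
  intro p hp
  rw [dist_left_lineMap]
  gcongr
  exact dist_le_hausdorffDist_of_mem_nearestPairs hAB hp

theorem hausdorffDist_right_nearestPointMorph_le (hA : IsProximinal A)
    (hAB : hausdorffEDist A B ≠ ⊤) (α : 𝕜) :
    hausdorffDist B (nearestPointMorph A B α) ≤ ‖1 - α‖ * hausdorffDist A B := by
  nth_rewrite 1 [← image_snd_nearestPairs (B := B) hA]
  refine hausdorffDist_image_image_le (mul_nonneg (norm_nonneg _) hausdorffDist_nonneg) ?_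
  intro p hp
  rw [dist_right_lineMap]
  gcongr
  exact dist_le_hausdorffDist_of_mem_nearestPairs hAB hp

theorem voronoiMorph_hausdorffDist_le_general (hA : IsProximinal A) (hB : IsProximinal B)
    (hAB : hausdorffEDist A B ≠ ⊤) (α : 𝕜) :
    hausdorffDist A (nearestPointMorph A B α) ≤ ‖α‖ * hausdorffDist A B ∧
    hausdorffDist B (nearestPointMorph A B α) ≤ ‖1 - α‖ * hausdorffDist A B :=
  ⟨hausdorffDist_left_nearestPointMorph_le hB hAB α,
    hausdorffDist_right_nearestPointMorph_le hA hAB α⟩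

end NormedAddTorsor

theorem voronoiMorph_eq_nearestPointMorph (A B : Set Plane) (α : ℝ) :
    voronoiMorph A B α = nearestPointMorph A B α := by
  ext x
  simp only [voronoiMorph, nearestPointMorph, nearestPairs, AffineMap.lineMap_apply_module,
    mem_union, mem_ofPred_eq, mem_image, mem_prod, Prod.exists]
  constructor
  · rintro (⟨a, ha, b, hb, hab, rfl⟩ | ⟨b, hb, a, ha, hba, rfl⟩)
    · exact ⟨a, b, ⟨⟨ha, hb⟩, .inl hab⟩, rfl⟩
    · exact ⟨a, b, ⟨⟨ha, hb⟩, .inr hba⟩, rfl⟩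
  · rintro ⟨a, b, ⟨⟨ha, hb⟩, hab | hba⟩, rfl⟩
    · exact .inl ⟨a, ha, b, hb, hab, rfl⟩
    · exact .inr ⟨b, hb, a, ha, hba, rfl⟩

theorem voronoiMorph_hausdorffDist_le (A B : Set Plane) (hAne : A.Nonempty) (hBne : B.Nonempty)
    (hA : IsCompact A) (hB : IsCompact B) (hAB : Metric.hausdorffDist A B ≤ 1)
    (α : ℝ) (hα : α ∈ Set.Icc (0 : ℝ) 1) :
    Metric.hausdorffDist A (voronoiMorph A B α) ≤ α ∧
    Metric.hausdorffDist B (voronoiMorph A B α) ≤ 1 - α := by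
  have hfin : hausdorffEDist A B ≠ ⊤ :=
    hausdorffEDist_ne_top_of_nonempty_of_bounded hAne hBne hA.isBounded hB.isBounded
  have hmorph := voronoiMorph_hausdorffDist_le_general
    (hA.exists_infDist_eq_dist hAne) (hB.exists_infDist_eq_dist hBne) hfin α
  have hα' : 0 ≤ 1 - α := sub_nonneg.2 hα.2
  rw [← voronoiMorph_eq_nearestPointMorph, Real.norm_of_nonneg hα.1,
    Real.norm_of_nonneg hα'] at hmorph
  exact hmorph.imp (·.trans (mul_le_of_le_one_right hα.1 hAB))
    (·.trans (mul_le_of_le_one_right hα' hAB))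
end
end

section
/- Let B be a nonempty compact subset of the Euclidean plane, let a₁, a₂ be points of the plane, and let b₁, b₂ ∈ B satisfy dist a₁ b₁ = Metric.infDist a₁ B and dist a₂ b₂ = Metric.infDist a₂ B. If some point p lies on both closed segments [a₁, b₁] and [a₂, b₂], then dist a₂ b₁ = Metric.infDist a₂ B, i.e., b₁ is also a nearest point of B to a₂. -/
open Metric Set Pointwise

noncomputable section

/-!
A nearest point of a set stays nearest to every point of a shortest path leading to it. Hence `b₁`
and `b₂` are both nearest to `p`, so they are equally far from `p`, and the path from `a₂` through
`p` to `b₁` is as short as the one to `b₂`.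
-/

section ShortestPath

variable {X : Type*} [PseudoMetricSpace X] {B : Set X}

theorem dist_eq_infDist_of_dist_add_dist_eq {a b p : X} (hb : b ∈ B)
    (hab : dist a b = infDist a B) (hp : dist a p + dist p b = dist a b) :
    dist p b = infDist p B := by
  have hle : infDist a B ≤ infDist p B + dist a p := infDist_le_infDist_add_dist
  exact le_antisymm (by linarith) (infDist_le_dist_of_mem hb)

theorem shortest_paths_meet_nearest_general {a₁ a₂ b₁ b₂ p : X} (hb₁ : b₁ ∈ B) (hb₂ : b₂ ∈ B)
    (h₁ : dist a₁ b₁ = infDist a₁ B) (h₂ : dist a₂ b₂ = infDist a₂ B)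
    (hp₁ : dist a₁ p + dist p b₁ = dist a₁ b₁) (hp₂ : dist a₂ p + dist p b₂ = dist a₂ b₂) :
    dist a₂ b₁ = infDist a₂ B := by
  have hpb : dist p b₁ = dist p b₂ :=
    (dist_eq_infDist_of_dist_add_dist_eq hb₁ h₁ hp₁).trans
      (dist_eq_infDist_of_dist_add_dist_eq hb₂ h₂ hp₂).symm
  refine le_antisymm ?_ (infDist_le_dist_of_mem hb₁)
  calc
    dist a₂ b₁ ≤ dist a₂ p + dist p b₁ := dist_triangle a₂ p b₁
    _ = dist a₂ p + dist p b₂ := by rw [hpb]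
    _ = dist a₂ b₂ := hp₂
    _ = infDist a₂ B := h₂

end ShortestPath

theorem shortest_paths_meet_nearest (B : Set Plane) (hBne : B.Nonempty) (hB : IsCompact B)
    (a₁ a₂ : Plane) (b₁ b₂ : Plane) (hb₁ : b₁ ∈ B) (hb₂ : b₂ ∈ B)
    (h₁ : dist a₁ b₁ = Metric.infDist a₁ B) (h₂ : dist a₂ b₂ = Metric.infDist a₂ B)
    (p : Plane) (hp₁ : p ∈ segment ℝ a₁ b₁) (hp₂ : p ∈ segment ℝ a₂ b₂) :
    dist a₂ b₁ = Metric.infDist a₂ B :=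
  shortest_paths_meet_nearest_general hb₁ hb₂ h₁ h₂ (dist_add_dist_of_mem_segment hp₁)
    (dist_add_dist_of_mem_segment hp₂)
end
end
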